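/- arXiv:1612.07596 — 6 statements merged into one kernel-verified Lean document; each statement's English description precedes it below -/
import Mathlib

section
/- Let m ≥ 1 and let A be a real (2m)×(2m) matrix, written in m×m blocks as A = [[A₁₁, A₁₂],[A₂₁, A₂₂]], which is symmetric (Aᵀ = A). Then A commutes with the block-diagonal matrix diag(o, o) for every o in the orthogonal group O(m) if and only if there exist real numbers f, h, b such that A₁₁ = f·1ₘ, A₂₂ = h·1ₘ, and A₁₂ = A₂₁ = b·1ₘ (where 1ₘ is the m×m identity matrix). -/
/-!
`A` commutes with `diag(o, o)` exactly when each of its four blocks commutes with `o`, so the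
point is that only the scalar matrices commute with all orthogonal matrices. Writing `P` for the
matrix of the transposition `(i j)` and `Eᵢⱼ` for the matrix units, `2 Eᵢⱼ = P - (1 - 2 Eᵢᵢ) P` is
a difference of two orthogonal matrices. As `2` is cancellable, a matrix commuting with the
orthogonal group commutes with every `Eᵢⱼ`, hence is scalar. Symmetry of `A` then identifies the
scalars of the two off-diagonal blocks.
-/

open Matrix

section Commutant

variable {n p R : Type*}

theorem toBlocks₁₂_transpose_of_isSymm {A : Matrix (n ⊕ p) (n ⊕ p) R} (hA : A.IsSymm) :
    A.toBlocks₁₂ᵀ = A.toBlocks₂₁ := by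
  rw [← fromBlocks_toBlocks A, isSymm_fromBlocks_iff] at hA
  exact hA.2.1

theorem mul_fromBlocks_diag_comm_iff [Fintype n] [Fintype p] [NonUnitalNonAssocSemiring R]
    (A : Matrix (n ⊕ p) (n ⊕ p) R) (D₁ : Matrix n n R) (D₂ : Matrix p p R) :
    A * fromBlocks D₁ 0 0 D₂ = fromBlocks D₁ 0 0 D₂ * A ↔
      A.toBlocks₁₁ * D₁ = D₁ * A.toBlocks₁₁ ∧ A.toBlocks₁₂ * D₂ = D₁ * A.toBlocks₁₂ ∧
      A.toBlocks₂₁ * D₁ = D₂ * A.toBlocks₂₁ ∧ A.toBlocks₂₂ * D₂ = D₂ * A.toBlocks₂₂ := by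
  conv_lhs => rw [← fromBlocks_toBlocks A, fromBlocks_multiply, fromBlocks_multiply]
  simp only [fromBlocks_inj, Matrix.mul_zero, Matrix.zero_mul, add_zero, zero_add]

variable [Fintype n] [DecidableEq n]

theorem single_mul_swap [Semiring R] (i j : n) (c : R) :
    single i i c * swap R i j = single i j c := by
  ext k l
  have swap_eq_left : i = Equiv.swap i j l ↔ j = l := by
    rw [eq_comm, Equiv.swap_apply_eq_iff, Equiv.swap_apply_left, eq_comm]
  simp [swap, PEquiv.mul_toMatrix_toPEquiv, single_apply, swap_eq_left]

variable [CommRing R]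

theorem swap_mem_orthogonalGroup (i j : n) : swap R i j ∈ orthogonalGroup n R := by
  rw [mem_orthogonalGroup_iff, transpose_swap, swap_mul_self]

theorem one_sub_single_two_mem_orthogonalGroup (i : n) :
    1 - single i i (2 : R) ∈ orthogonalGroup n R := by
  rw [mem_orthogonalGroup_iff, transpose_sub, transpose_one, transpose_single, sub_mul, mul_sub,
    mul_sub, single_mul_single_same, Matrix.one_mul, Matrix.one_mul, Matrix.mul_one]
  have double : single i i (2 * 2 : R) = single i i 2 + single i i 2 := by
    rw [← single_add, two_mul]
  rw [double]
  abel

theorem single_two_eq_swap_sub (i j : n) :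
    single i j (2 : R) = swap R i j - (1 - single i i 2) * swap R i j := by
  rw [sub_mul, Matrix.one_mul, sub_sub_cancel, single_mul_swap]

theorem commute_single_of_forall_commute_orthogonal (h2 : IsLeftRegular (2 : R))
    {M : Matrix n n R} (hM : ∀ o ∈ orthogonalGroup n R, Commute M o) (i j : n) :
    Commute (single i j 1) M := by
  have swap_mem := swap_mem_orthogonalGroup (R := R) i j
  have reflection_swap_mem := mul_mem (one_sub_single_two_mem_orthogonalGroup i) swap_mem
  have commute_two : Commute M (single i j 2) := by
    rw [single_two_eq_swap_sub]
    exact (hM _ swap_mem).sub_right (hM _ reflection_swap_mem)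
  have single_two : single i j (2 : R) = (2 : R) • single i j 1 := by
    rw [smul_single, smul_eq_mul, mul_one]
  rw [single_two, commute_iff_eq, mul_smul_comm, smul_mul_assoc] at commute_two
  exact (h2.matrix commute_two).symm

theorem forall_commute_orthogonal_iff_exists_eq_smul_one (h2 : IsLeftRegular (2 : R))
    {M : Matrix n n R} :
    (∀ o ∈ orthogonalGroup n R, Commute M o) ↔ ∃ c : R, M = c • (1 : Matrix n n R) := by
  constructor
  · intro hM
    obtain ⟨c, rfl⟩ := mem_range_scalar_iff_commute_single'.mpr
      (commute_single_of_forall_commute_orthogonal h2 hM)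
    exact ⟨c, by rw [scalar_apply, smul_one_eq_diagonal]⟩
  · rintro ⟨c, rfl⟩ o -
    exact (Commute.one_left o).smul_left c

theorem forall_mul_fromBlocks_orthogonal_comm_iff (h2 : IsLeftRegular (2 : R))
    (A : Matrix (n ⊕ n) (n ⊕ n) R) :
    (∀ o : orthogonalGroup n R, A * fromBlocks (o : Matrix n n R) 0 0 (o : Matrix n n R) =
        fromBlocks (o : Matrix n n R) 0 0 (o : Matrix n n R) * A) ↔
      (∃ c : R, A.toBlocks₁₁ = c • (1 : Matrix n n R)) ∧
      (∃ c : R, A.toBlocks₁₂ = c • (1 : Matrix n n R)) ∧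
      (∃ c : R, A.toBlocks₂₁ = c • (1 : Matrix n n R)) ∧
      ∃ c : R, A.toBlocks₂₂ = c • (1 : Matrix n n R) := by
  simp only [mul_fromBlocks_diag_comm_iff, forall_and, SetLike.forall,
    ← forall_commute_orthogonal_iff_exists_eq_smul_one h2, commute_iff_eq]

theorem statement0_general (h2 : IsLeftRegular (2 : R)) (A : Matrix (n ⊕ n) (n ⊕ n) R)
    (hA : A.IsSymm) :
    (∀ o : orthogonalGroup n R, A * fromBlocks (o : Matrix n n R) 0 0 (o : Matrix n n R) =
        fromBlocks (o : Matrix n n R) 0 0 (o : Matrix n n R) * A) ↔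
      ∃ f h b : R, A.toBlocks₁₁ = f • (1 : Matrix n n R) ∧ A.toBlocks₂₂ = h • (1 : Matrix n n R) ∧
        A.toBlocks₁₂ = b • (1 : Matrix n n R) ∧ A.toBlocks₂₁ = b • (1 : Matrix n n R) := by
  rw [forall_mul_fromBlocks_orthogonal_comm_iff h2]
  constructor
  · rintro ⟨⟨f, hf⟩, ⟨b, hb⟩, -, ⟨h, hh⟩⟩
    have hb' : A.toBlocks₂₁ = b • (1 : Matrix n n R) := by
      rw [← toBlocks₁₂_transpose_of_isSymm hA, hb, transpose_smul, transpose_one]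
    exact ⟨f, h, b, hf, hh, hb, hb'⟩
  · rintro ⟨f, h, b, hf, hh, hb, hb'⟩
    exact ⟨⟨f, hf⟩, ⟨b, hb⟩, ⟨b, hb'⟩, ⟨h, hh⟩⟩

end Commutant

/-- **O(m) case of the commutant Lemma.**
A symmetric real `(2m)×(2m)` matrix, written in `m×m` blocks, commutes with the
block-diagonal matrix `diag(o, o)` for every `o` in the orthogonal group `O(m)`
if and only if its blocks are `A₁₁ = f·1`, `A₂₂ = h·1`, `A₁₂ = A₂₁ = b·1` for
some real numbers `f, h, b`. -/
theorem statement0 (m : ℕ) (hm : 1 ≤ m)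
    (A : Matrix (Fin m ⊕ Fin m) (Fin m ⊕ Fin m) ℝ) (hA : A.IsSymm) :
    (∀ o : Matrix.orthogonalGroup (Fin m) ℝ,
        A * Matrix.fromBlocks (o : Matrix (Fin m) (Fin m) ℝ) 0 0 (o : Matrix (Fin m) (Fin m) ℝ)
          = Matrix.fromBlocks (o : Matrix (Fin m) (Fin m) ℝ) 0 0 (o : Matrix (Fin m) (Fin m) ℝ) * A)
      ↔ ∃ f h b : ℝ,
          A.toBlocks₁₁ = f • (1 : Matrix (Fin m) (Fin m) ℝ) ∧
          A.toBlocks₂₂ = h • (1 : Matrix (Fin m) (Fin m) ℝ) ∧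
          A.toBlocks₁₂ = b • (1 : Matrix (Fin m) (Fin m) ℝ) ∧
          A.toBlocks₂₁ = b • (1 : Matrix (Fin m) (Fin m) ℝ) :=
  statement0_general (IsRegular.of_ne_zero two_ne_zero).left A hA
end

section
/- Let m ≥ 3 and let A be a real (2m)×(2m) matrix, written in m×m blocks as A = [[A₁₁, A₁₂],[A₂₁, A₂₂]], which is symmetric (Aᵀ = A). Then A commutes with the block-diagonal matrix diag(o, o) for every o in the special orthogonal group SO(m) if and only if there exist real numbers f, h, b such that A₁₁ = f·1ₘ, A₂₂ = h·1ₘ, and A₁₂ = A₂₁ = b·1ₘ (where 1ₘ is the m×m identity matrix). -/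
/-!
Comparing blocks, `A` commutes with every `diag(o, o)` iff each of its four blocks lies in the
centralizer of `SO(n)`, which consists of the scalar matrices unless `n = 2`. Indeed, two distinct
indices `i` and `j` then leave room for a third index `k`. The diagonal matrix with entries `-1` at
`j` and `k` and `1` elsewhere lies in `SO(n)`, and commuting with it forces `2 * B i j = 0`; the
3-cycle through `i`, `j`, `k` is an even permutation, and commuting with its matrix forces
`B i i = B j j`. Symmetry of `A` makes the scalars of the two off-diagonal blocks agree.
-/

open Matrix

lemma exists_ne_and_ne_of_card_ne_two {α : Type*} (hα : Nat.card α ≠ 2) {a b : α}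
    (hab : a ≠ b) : ∃ c, c ≠ a ∧ c ≠ b := by
  by_contra! h
  exact hα <| (Nat.card_eq_two_iff' a).2 ⟨b, hab.symm, h⟩

section

variable {n R : Type*} [Fintype n]

lemma commute_fromBlocks_diag_iff [NonUnitalNonAssocSemiring R] {A : Matrix (n ⊕ n) (n ⊕ n) R}
    {o : Matrix n n R} :
    Commute A (fromBlocks o 0 0 o) ↔
      Commute A.toBlocks₁₁ o ∧ Commute A.toBlocks₁₂ o ∧
        Commute A.toBlocks₂₁ o ∧ Commute A.toBlocks₂₂ o := by
  conv_lhs => rw [← fromBlocks_toBlocks A]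
  simp only [commute_iff_eq, fromBlocks_multiply, fromBlocks_inj, mul_zero, zero_mul, add_zero,
    zero_add]

variable [DecidableEq n]

lemma apply_apply_of_commute_permMatrix [NonAssocSemiring R] {B : Matrix n n R}
    {σ : Equiv.Perm n} (h : Commute (σ.permMatrix R) B) (i j : n) : B (σ i) (σ j) = B i j := by
  have hentry := congrFun₂ h.eq i (σ j)
  rw [Equiv.Perm.permMatrix, PEquiv.toMatrix_toPEquiv_mul, PEquiv.mul_toMatrix_toPEquiv] at hentry
  simpa only [submatrix_apply, id_eq, Equiv.symm_apply_apply] using hentry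

variable [CommRing R]

lemma apply_eq_zero_of_commute_diagonal {B : Matrix n n R} {d : n → R}
    (h : Commute (diagonal d) B) {i j : n} (hd : IsRegular (d i - d j)) : B i j = 0 := by
  have hentry : d i * B i j = B i j * d j := by
    simpa only [diagonal_mul, mul_diagonal] using congrFun₂ h.eq i j
  refine hd.left.mul_left_eq_zero_iff.1 ?_
  rw [sub_mul, hentry, mul_comm, sub_self]

lemma diagonal_mem_specialOrthogonalGroup_iff {d : n → R} :
    diagonal d ∈ specialOrthogonalGroup n R ↔ d * d = 1 ∧ ∏ i, d i = 1 := by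
  rw [mem_specialOrthogonalGroup_iff, mem_orthogonalGroup_iff, diagonal_transpose,
    diagonal_mul_diagonal', det_diagonal, ← diagonal_one', diagonal_injective.eq_iff]
  rfl

lemma diagonal_mulSingle_neg_one_mem_specialOrthogonalGroup (i j : n) :
    diagonal (Pi.mulSingle i (-1) * Pi.mulSingle j (-1)) ∈ specialOrthogonalGroup n R := by
  refine diagonal_mem_specialOrthogonalGroup_iff.2 ⟨?_, ?_⟩
  · simp only [mul_mul_mul_comm, ← Pi.mulSingle_mul, neg_mul_neg, mul_one, Pi.mulSingle_one]
  · simp only [Pi.mul_apply, Finset.prod_mul_distrib, Fintype.prod_pi_mulSingle', neg_mul_neg,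
      mul_one]

lemma permMatrix_mem_specialOrthogonalGroup {σ : Equiv.Perm n} (hσ : σ ∈ alternatingGroup n) :
    σ.permMatrix R ∈ specialOrthogonalGroup n R := by
  rw [mem_specialOrthogonalGroup_iff, mem_orthogonalGroup_iff, transpose_permMatrix,
    ← permMatrix_mul, inv_mul_cancel, permMatrix_one, det_permutation,
    Equiv.Perm.mem_alternatingGroup.1 hσ]
  exact ⟨rfl, by simp⟩

lemma apply_eq_zero_of_commute_specialOrthogonalGroup (hn : Nat.card n ≠ 2)
    (h2 : IsRegular (2 : R)) {B : Matrix n n R}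
    (hB : ∀ o ∈ specialOrthogonalGroup n R, Commute o B) {i j : n} (hij : i ≠ j) :
    B i j = 0 := by
  obtain ⟨k, hki, hkj⟩ := exists_ne_and_ne_of_card_ne_two hn hij
  refine apply_eq_zero_of_commute_diagonal
    (hB _ (diagonal_mulSingle_neg_one_mem_specialOrthogonalGroup j k)) ?_
  simpa [hij, hij.symm, hki.symm, hkj.symm, one_add_one_eq_two] using h2

lemma apply_self_eq_of_commute_specialOrthogonalGroup (hn : Nat.card n ≠ 2)
    {B : Matrix n n R} (hB : ∀ o ∈ specialOrthogonalGroup n R, Commute o B) (i j : n) :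
    B i i = B j j := by
  rcases eq_or_ne i j with rfl | hij
  · rfl
  obtain ⟨k, hki, hkj⟩ := exists_ne_and_ne_of_card_ne_two hn hij
  have hcycle : (Equiv.swap i k * Equiv.swap i j).IsThreeCycle :=
    Equiv.Perm.isThreeCycle_swap_mul_swap_same hki.symm hij hkj
  have hmap : (Equiv.swap i k * Equiv.swap i j) i = j := by
    rw [Equiv.Perm.mul_apply, Equiv.swap_apply_left,
      Equiv.swap_apply_of_ne_of_ne hij.symm hkj.symm]
  have hinv := apply_apply_of_commute_permMatrix
    (hB _ (permMatrix_mem_specialOrthogonalGroup hcycle.mem_alternatingGroup)) i i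
  rw [hmap] at hinv
  exact hinv.symm

theorem centralizer_specialOrthogonalGroup (hn : Nat.card n ≠ 2) (h2 : IsRegular (2 : R)) :
    Subalgebra.centralizer R (specialOrthogonalGroup n R : Set (Matrix n n R)) = ⊥ := by
  refine eq_bot_iff.2 fun B hB ↦ Algebra.mem_bot.2 ?_
  have hcomm : ∀ o ∈ specialOrthogonalGroup n R, Commute o B :=
    (Subalgebra.mem_centralizer_iff R).1 hB
  cases isEmpty_or_nonempty n with
  | inl _ => exact ⟨0, Subsingleton.elim _ _⟩
  | inr hne =>
    obtain ⟨i⟩ := hne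
    refine ⟨B i i, ?_⟩
    ext j k
    rcases eq_or_ne j k with rfl | hjk
    · simp [algebraMap_matrix_apply, apply_self_eq_of_commute_specialOrthogonalGroup hn hcomm i j]
    · simp [algebraMap_matrix_apply, hjk,
        apply_eq_zero_of_commute_specialOrthogonalGroup hn h2 hcomm hjk]

lemma forall_commute_specialOrthogonalGroup_iff (hn : Nat.card n ≠ 2)
    (h2 : IsRegular (2 : R)) {B : Matrix n n R} :
    (∀ o : specialOrthogonalGroup n R, Commute B o) ↔ ∃ c : R, B = c • (1 : Matrix n n R) := by
  have hmem : B ∈ Subalgebra.centralizer R (specialOrthogonalGroup n R : Set (Matrix n n R)) ↔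
      ∀ o : specialOrthogonalGroup n R, Commute B o := by
    simp [Subalgebra.mem_centralizer_iff, commute_iff_eq, eq_comm]
  rw [← hmem, centralizer_specialOrthogonalGroup hn h2, Algebra.mem_bot]
  simp only [Set.mem_range, Algebra.algebraMap_eq_smul_one, eq_comm]

theorem statement1_general (hn : Nat.card n ≠ 2) (h2 : IsRegular (2 : R))
    (A : Matrix (n ⊕ n) (n ⊕ n) R) (hA : A.IsSymm) :
    (∀ o : specialOrthogonalGroup n R,
        A * fromBlocks (o : Matrix n n R) 0 0 (o : Matrix n n R)
          = fromBlocks (o : Matrix n n R) 0 0 (o : Matrix n n R) * A)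
      ↔ ∃ f h b : R,
          A.toBlocks₁₁ = f • (1 : Matrix n n R) ∧
          A.toBlocks₂₂ = h • (1 : Matrix n n R) ∧
          A.toBlocks₁₂ = b • (1 : Matrix n n R) ∧
          A.toBlocks₂₁ = b • (1 : Matrix n n R) := by
  have hscalar (B : Matrix n n R) :
      (∀ o : specialOrthogonalGroup n R, Commute B o) ↔ ∃ c : R, B = c • (1 : Matrix n n R) :=
    forall_commute_specialOrthogonalGroup_iff hn h2
  have htr : A.toBlocks₂₁ = A.toBlocks₁₂ᵀ := by
    ext i j
    exact hA.apply _ _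
  simp only [← commute_iff_eq, commute_fromBlocks_diag_iff, forall_and, hscalar]
  constructor
  · rintro ⟨⟨f, hf⟩, ⟨b, hb⟩, -, ⟨h, hh⟩⟩
    exact ⟨f, h, b, hf, hh, hb, by rw [htr, hb, transpose_smul, transpose_one]⟩
  · rintro ⟨f, h, b, hf, hh, hb, hb'⟩
    exact ⟨⟨f, hf⟩, ⟨b, hb⟩, ⟨b, hb'⟩, ⟨h, hh⟩⟩

end

/-- **SO(m), m ≥ 3, case of the commutant Lemma.**
A symmetric real `(2m)×(2m)` matrix, written in `m×m` blocks, commutes with the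
block-diagonal matrix `diag(o, o)` for every `o` in the special orthogonal group
`SO(m)` (m ≥ 3) if and only if its blocks are `A₁₁ = f·1`, `A₂₂ = h·1`,
`A₁₂ = A₂₁ = b·1` for some real numbers `f, h, b`. -/
theorem statement1 (m : ℕ) (hm : 3 ≤ m)
    (A : Matrix (Fin m ⊕ Fin m) (Fin m ⊕ Fin m) ℝ) (hA : A.IsSymm) :
    (∀ o : Matrix.specialOrthogonalGroup (Fin m) ℝ,
        A * Matrix.fromBlocks (o : Matrix (Fin m) (Fin m) ℝ) 0 0 (o : Matrix (Fin m) (Fin m) ℝ)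
          = Matrix.fromBlocks (o : Matrix (Fin m) (Fin m) ℝ) 0 0 (o : Matrix (Fin m) (Fin m) ℝ) * A)
      ↔ ∃ f h b : ℝ,
          A.toBlocks₁₁ = f • (1 : Matrix (Fin m) (Fin m) ℝ) ∧
          A.toBlocks₂₂ = h • (1 : Matrix (Fin m) (Fin m) ℝ) ∧
          A.toBlocks₁₂ = b • (1 : Matrix (Fin m) (Fin m) ℝ) ∧
          A.toBlocks₂₁ = b • (1 : Matrix (Fin m) (Fin m) ℝ) :=
  statement1_general (by rw [Nat.card_fin]; lia) (IsRegular.of_ne_zero two_ne_zero) A hA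
end

section
/- Let A be a real 4×4 matrix, written in 2×2 blocks as A = [[A₁₁, A₁₂],[A₂₁, A₂₂]], which is symmetric (Aᵀ = A). Then A commutes with the block-diagonal matrix diag(o, o) for every o in SO(2) if and only if there exist real numbers f, h, b, c such that A₁₁ = f·1₂, A₂₂ = h·1₂, A₂₁ = [[b, −c],[c, b]] and A₁₂ = [[b, c],[−c, b]]; that is, A = [[f,0,b,c],[0,f,−c,b],[b,−c,h,0],[c,b,0,h]]. -/
/-!
A matrix commutes with `diag(o, o)` exactly when each of its blocks commutes with `o`. Since the
quarter turn is in `SO(2)`, a block commuting with all of `SO(2)` is a matrix `[[p, -q], [q, p]]`,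
that is, a complex number `p + iq`; conversely rotations are complex numbers too, and complex
numbers commute. Symmetry makes the diagonal blocks equal to their own conjugates, hence real, and
the two off-diagonal blocks conjugate to each other.
-/

open Matrix

/-- The real form of multiplication by the complex number `p + iq` in the basis `1, i`, with entries
in an arbitrary ring. In the paper's notation this is `p·1₂ + q·J`. -/
def complexMatrix {R : Type*} [Neg R] (p q : R) : Matrix (Fin 2) (Fin 2) R :=
  !![p, -q; q, p]

section Ring

variable {R : Type*} [Ring R]

theorem complexMatrix_zero_right (p : R) : complexMatrix p 0 = p • 1 := by
  simp [complexMatrix, one_fin_two]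

theorem transpose_complexMatrix (p q : R) : (complexMatrix p q)ᵀ = complexMatrix p (-q) := by
  ext i j
  fin_cases i <;> fin_cases j <;> simp [complexMatrix]

theorem isSymm_complexMatrix_iff (h2 : IsLeftRegular (2 : R)) {p q : R} :
    (complexMatrix p q).IsSymm ↔ q = 0 := by
  refine ⟨fun hsymm => ?_, fun hq => ?_⟩
  · have hq : q = -q := hsymm.apply 0 1
    exact h2.mul_left_eq_zero_iff.mp (by rwa [two_mul, ← eq_neg_iff_add_eq_zero])
  · rw [hq, complexMatrix_zero_right]
    exact isSymm_one.smul p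

theorem exists_eq_complexMatrix {M : Matrix (Fin 2) (Fin 2) R} (hdiag : M 0 0 = M 1 1)
    (hoff : M 0 1 = -M 1 0) : ∃ p q, M = complexMatrix p q := by
  refine ⟨M 0 0, M 1 0, ?_⟩
  calc M = !![M 0 0, M 0 1; M 1 0, M 1 1] := eta_fin_two M
    _ = complexMatrix (M 0 0) (M 1 0) := by rw [complexMatrix, hoff, hdiag]

theorem exists_eq_complexMatrix_of_commute_complexMatrix_zero_one
    {M : Matrix (Fin 2) (Fin 2) R} (hM : Commute M (complexMatrix 0 1)) :
    ∃ p q, M = complexMatrix p q := by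
  have hoff : M 0 1 = -M 1 0 := by
    simpa [complexMatrix, mul_apply] using congr_fun₂ hM.eq 0 0
  have hdiag : M 0 0 = M 1 1 := by
    simpa [complexMatrix, mul_apply] using (congr_fun₂ hM.eq 1 0).symm
  exact exists_eq_complexMatrix hdiag hoff

end Ring

section CommRing

variable {R : Type*} [CommRing R]

theorem commute_complexMatrix (p q r s : R) :
    Commute (complexMatrix p q) (complexMatrix r s) := by
  ext i j
  fin_cases i <;> fin_cases j <;> simp [complexMatrix, mul_apply] <;> ring

theorem complexMatrix_zero_one_mem_specialOrthogonalGroup :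
    complexMatrix (0 : R) 1 ∈ specialOrthogonalGroup (Fin 2) R := by
  simp [complexMatrix]

theorem exists_eq_complexMatrix_of_mem_specialOrthogonalGroup {o : Matrix (Fin 2) (Fin 2) R}
    (ho : o ∈ specialOrthogonalGroup (Fin 2) R) : ∃ p q, o = complexMatrix p q := by
  obtain ⟨hdiag, hoff, -⟩ := mem_specialOrthogonalGroup_fin_two_iff.mp ho
  exact exists_eq_complexMatrix hdiag hoff

theorem forall_commute_specialOrthogonalGroup_iff_s2 {M : Matrix (Fin 2) (Fin 2) R} :
    (∀ o : specialOrthogonalGroup (Fin 2) R, Commute M o) ↔ ∃ p q, M = complexMatrix p q := by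
  refine ⟨fun hM => ?_, ?_⟩
  · exact exists_eq_complexMatrix_of_commute_complexMatrix_zero_one
      (hM ⟨_, complexMatrix_zero_one_mem_specialOrthogonalGroup⟩)
  · rintro ⟨p, q, rfl⟩ ⟨o, ho⟩
    obtain ⟨r, s, rfl⟩ := exists_eq_complexMatrix_of_mem_specialOrthogonalGroup ho
    exact commute_complexMatrix p q r s

end CommRing

theorem commute_fromBlocks_diag_iff_s2 {n α : Type*} [Fintype n] [NonUnitalNonAssocSemiring α]
    {P Q S T o : Matrix n n α} :
    Commute (fromBlocks P Q S T) (fromBlocks o 0 0 o) ↔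
      Commute P o ∧ Commute Q o ∧ Commute S o ∧ Commute T o := by
  simp only [commute_iff_eq, fromBlocks_multiply, Matrix.mul_zero, Matrix.zero_mul, add_zero,
    zero_add, fromBlocks_inj]

theorem statement2_general {R : Type*} [CommRing R] (h2 : IsLeftRegular (2 : R))
    (A : Matrix (Fin 2 ⊕ Fin 2) (Fin 2 ⊕ Fin 2) R) (hA : A.IsSymm) :
    (∀ o : specialOrthogonalGroup (Fin 2) R,
        Commute A (fromBlocks (o : Matrix (Fin 2) (Fin 2) R) 0 0 o)) ↔
      ∃ f h b c : R, A.toBlocks₁₁ = f • 1 ∧ A.toBlocks₂₂ = h • 1 ∧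
        A.toBlocks₂₁ = !![b, -c; c, b] ∧ A.toBlocks₁₂ = !![b, c; -c, b] := by
  obtain ⟨P, Q, S, T, rfl⟩ : ∃ P Q S T, A = fromBlocks P Q S T :=
    ⟨_, _, _, _, (fromBlocks_toBlocks A).symm⟩
  obtain ⟨hP, -, hQ, hT⟩ := isSymm_fromBlocks_iff.mp hA
  have conj_eq (b c : R) : complexMatrix b (-c) = !![b, c; -c, b] := by
    rw [complexMatrix, neg_neg]
  simp only [commute_fromBlocks_diag_iff_s2, forall_and, forall_commute_specialOrthogonalGroup_iff_s2,
    toBlocks_fromBlocks₁₁, toBlocks_fromBlocks₁₂, toBlocks_fromBlocks₂₁, toBlocks_fromBlocks₂₂,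
    ← conj_eq, ← complexMatrix_zero_right]
  constructor
  · rintro ⟨⟨f, f', rfl⟩, -, ⟨b, c, rfl⟩, ⟨h, h', rfl⟩⟩
    obtain rfl : f' = 0 := (isSymm_complexMatrix_iff h2).mp hP
    obtain rfl : h' = 0 := (isSymm_complexMatrix_iff h2).mp hT
    exact ⟨f, h, b, c, rfl, rfl, rfl, hQ.symm.trans (transpose_complexMatrix b c)⟩
  · rintro ⟨f, h, b, c, hP', hT', hS', hQ'⟩
    exact ⟨⟨f, 0, hP'⟩, ⟨b, -c, hQ'⟩, ⟨b, c, hS'⟩, ⟨h, 0, hT'⟩⟩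

/-- **SO(2) (exceptional) case of the commutant Lemma.**
A symmetric real `4×4` matrix, written in `2×2` blocks, commutes with the
block-diagonal matrix `diag(o, o)` for every `o ∈ SO(2)` if and only if there
exist real numbers `f, h, b, c` with `A₁₁ = f·1₂`, `A₂₂ = h·1₂`,
`A₂₁ = [[b, −c],[c, b]]` and `A₁₂ = [[b, c],[−c, b]]`. -/
theorem statement2
    (A : Matrix (Fin 2 ⊕ Fin 2) (Fin 2 ⊕ Fin 2) ℝ) (hA : A.IsSymm) :
    (∀ o : Matrix.specialOrthogonalGroup (Fin 2) ℝ,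
        A * Matrix.fromBlocks (o : Matrix (Fin 2) (Fin 2) ℝ) 0 0 (o : Matrix (Fin 2) (Fin 2) ℝ)
          = Matrix.fromBlocks (o : Matrix (Fin 2) (Fin 2) ℝ) 0 0 (o : Matrix (Fin 2) (Fin 2) ℝ) * A)
      ↔ ∃ f h b c : ℝ,
          A.toBlocks₁₁ = f • (1 : Matrix (Fin 2) (Fin 2) ℝ) ∧
          A.toBlocks₂₂ = h • (1 : Matrix (Fin 2) (Fin 2) ℝ) ∧
          A.toBlocks₂₁ = !![b, -c; c, b] ∧
          A.toBlocks₁₂ = !![b, c; -c, b] :=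
  statement2_general (IsRegular.of_ne_zero two_ne_zero).left A hA
end

section
/- Let f, h, b, c be real numbers, let G be the real symmetric 4×4 matrix G = [[f,0,b,c],[0,f,−c,b],[b,−c,h,0],[c,b,0,h]], and set Δ = f·h − b² − c². Then the following are equivalent: (1) Δ < 0; (2) exactly two of the four (real) eigenvalues of G, counted with multiplicity, are positive and exactly two are negative, i.e. G has signature (2,2). -/
open Matrix Finset

/-!
In blocks, `G = [[f I, B], [Bᵀ, h I]]` with `B Bᵀ = (b² + c²) I`. Eliminating the lower left block
shows that the characteristic polynomial of `G` is a power of the quadratic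
`Q = (X - f) (X - h) - (b² + c²)`, the exponent being the size of the blocks. Since `G` is
symmetric, `Q` splits over `ℝ`, and the eigenvalues of `G` are the two roots `p`, `q` of `Q`, each
repeated as many times as the block size. Hence `G` has split signature exactly when `p` and `q`
have opposite signs, that is, when their product `p q = Q(0) = Δ` is negative.
-/

open Polynomial (X C C_0 C_1)

section BlockMatrices

variable {m n R S : Type*} [DecidableEq n] [CommRing R] [CommRing S] [Algebra R S]

theorem map_C_smul_one (r : R) :
    (r • (1 : Matrix n n S)).map C = C (algebraMap R S r) • (1 : Matrix n n (Polynomial S)) := by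
  rw [← algebraMap_smul S r, Matrix.map_smul' C _ _ (map_mul C), Matrix.map_one C C_0 C_1]

variable [Fintype n]

/- A Schur complement formula that does not need `t` to be invertible: it will be applied with
`t = X - h`, whose powers can be cancelled. -/
theorem det_fromBlocks_smul_one_mul_pow [Fintype m] [DecidableEq m] (A : Matrix m m R)
    (B : Matrix m n R) (B' : Matrix n m R) (t : R) :
    (fromBlocks A B B' (t • 1)).det * t ^ Fintype.card m =
      (t • A - B * B').det * t ^ Fintype.card n := by
  have elimination : fromBlocks A B B' (t • 1) * fromBlocks (t • 1) 0 (-B') 1 =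
      fromBlocks (t • A - B * B') B 0 (t • 1) := by
    simp [fromBlocks_multiply, sub_eq_add_neg]
  simpa [det_mul, det_fromBlocks_zero₁₂, det_fromBlocks_zero₂₁] using congrArg det elimination

theorem charpoly_fromBlocks_smul_one {f h d : R} {B B' : Matrix n n S}
    (hB : B * B' = d • (1 : Matrix n n S)) :
    (fromBlocks (f • 1) B B' (h • 1)).charpoly =
      (((X - C f) * (X - C h) - C d) ^ Fintype.card n).map (algebraMap R S) := by
  set φ := algebraMap R S
  have charmatrix_smul_one (r : R) : charmatrix (r • (1 : Matrix n n S)) = (X - C (φ r)) • 1 := by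
    rw [charmatrix, RingHom.mapMatrix_apply, map_C_smul_one, scalar_apply, ← smul_one_eq_diagonal,
      sub_smul]
  have map_mul_map : B.map C * B'.map C = C (φ d) • (1 : Matrix n n (Polynomial S)) := by
    rw [← Matrix.map_mul, hB, map_C_smul_one]
  have det_mul_pow := det_fromBlocks_smul_one_mul_pow
    ((X - C (φ f)) • (1 : Matrix n n (Polynomial S))) (-B.map C) (-B'.map C) (X - C (φ h))
  apply ((Polynomial.monic_X_sub_C (φ h)).pow (Fintype.card n)).isRegular.right
  simp only [charpoly, charmatrix_fromBlocks, charmatrix_smul_one]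
  refine det_mul_pow.trans ?_
  rw [neg_mul_neg, map_mul_map, smul_smul, ← sub_smul, det_smul, det_one, mul_one,
    mul_comm (X - C (φ h))]
  simp [φ]

end BlockMatrices

theorem coeff_zero_neg_iff_countP_roots {R : Type*} [CommRing R] [LinearOrder R]
    [IsStrictOrderedRing R] {Q : Polynomial R} (hQ : Q.Monic) (hdeg : Q.natDegree = 2)
    (hsplit : Q.Splits) :
    Q.coeff 0 < 0 ↔ Q.roots.countP (0 < ·) = 1 ∧ Q.roots.countP (· < 0) = 1 := by
  obtain ⟨p, q, hroots⟩ := Multiset.card_eq_two.mp (hsplit.natDegree_eq_card_roots ▸ hdeg)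
  have coeff_zero : Q.coeff 0 = p * q := by
    simp [hsplit.coeff_zero_eq_prod_roots_of_monic hQ, hdeg, hroots]
  rw [coeff_zero, hroots, mul_neg_iff]
  simp only [Multiset.insert_eq_cons, ← Multiset.cons_zero, Multiset.countP_cons,
    Multiset.countP_zero]
  rcases lt_trichotomy p 0 with hp | hp | hp <;> rcases lt_trichotomy q 0 with hq | hq | hq <;>
    simp [hp, hq, hp.not_gt, hq.not_gt]

section Eigenvalues

variable {ι 𝕜 : Type*} [Fintype ι] [DecidableEq ι] [RCLike 𝕜] {A : Matrix ι ι 𝕜}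
  {P Q : Polynomial ℝ}

theorem eq_prod_eigenvalues_of_charpoly_eq_map (hA : A.IsHermitian)
    (hP : A.charpoly = P.map (algebraMap ℝ 𝕜)) : P = ∏ i, (X - C (hA.eigenvalues i)) := by
  apply Polynomial.map_injective _ (algebraMap ℝ 𝕜).injective
  rw [← hP, hA.charpoly_eq, Polynomial.map_prod]
  simp

theorem card_filter_eigenvalues_eq_countP_roots (hA : A.IsHermitian)
    (hP : A.charpoly = P.map (algebraMap ℝ 𝕜)) (s : ℝ → Prop) [DecidablePred s] :
    #{i | s (hA.eigenvalues i)} = P.roots.countP s := by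
  have hroots : P.roots = univ.val.map hA.eigenvalues := by
    rw [eq_prod_eigenvalues_of_charpoly_eq_map hA hP,
      Polynomial.roots_prod _ _ (prod_ne_zero_iff.mpr fun _ _ ↦ Polynomial.X_sub_C_ne_zero _)]
    simp only [Polynomial.roots_X_sub_C, Multiset.bind_singleton]
  rw [hroots, Multiset.countP_map]
  rfl

theorem coeff_zero_neg_iff_card_eigenvalues (hA : A.IsHermitian) (hQ : Q.Monic)
    (hdeg : Q.natDegree = 2) {k : ℕ} (hk : k ≠ 0)
    (hchar : A.charpoly = (Q ^ k).map (algebraMap ℝ 𝕜)) :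
    Q.coeff 0 < 0 ↔
      #{i | 0 < hA.eigenvalues i} = k ∧ #{i | hA.eigenvalues i < 0} = k := by
  have hsplit : Q.Splits := by
    have hsplit_pow : (Q ^ k).Splits := by
      rw [eq_prod_eigenvalues_of_charpoly_eq_map hA hchar]
      exact .prod fun i _ ↦ Polynomial.Splits.X_sub_C _
    exact hsplit_pow.of_dvd (hQ.pow k).ne_zero (dvd_pow_self Q hk)
  rw [coeff_zero_neg_iff_countP_roots hQ hdeg hsplit,
    card_filter_eigenvalues_eq_countP_roots hA hchar (0 < ·),
    card_filter_eigenvalues_eq_countP_roots hA hchar (· < 0)]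
  simp only [Polynomial.roots_pow, Multiset.countP_nsmul, mul_eq_left₀ hk]

theorem statement4_general {n : Type*} [Fintype n] [DecidableEq n] [Nonempty n] (e : n ⊕ n ≃ ι)
    (f h d : ℝ) {B : Matrix n n 𝕜} (hB : B * Bᴴ = d • (1 : Matrix n n 𝕜))
    (hA_eq : A = reindex e e (fromBlocks (f • 1) B Bᴴ (h • 1))) (hA : A.IsHermitian) :
    f * h - d < 0 ↔
      #{i | 0 < hA.eigenvalues i} = Fintype.card n ∧
      #{i | hA.eigenvalues i < 0} = Fintype.card n := by
  have hchar := charpoly_fromBlocks_smul_one (f := f) (h := h) hB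
  rw [← charpoly_reindex e, ← hA_eq] at hchar
  have hQ : ((X - C f) * (X - C h) - C d).Monic := by monicity!
  have hdeg : ((X - C f) * (X - C h) - C d).natDegree = 2 := by compute_degree!
  rw [← coeff_zero_neg_iff_card_eigenvalues hA hQ hdeg Fintype.card_ne_zero hchar]
  simp [Polynomial.mul_coeff_zero]

end Eigenvalues

section CiconiaBlocks

variable {R : Type*} [CommRing R] [StarRing R] [TrivialStar R]

theorem ciconia_block_mul_conjTranspose (b c : R) :
    !![b, c; -c, b] * !![b, c; -c, b]ᴴ = (b ^ 2 + c ^ 2) • (1 : Matrix (Fin 2) (Fin 2) R) := by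
  ext i j
  fin_cases i <;> fin_cases j <;> simp [Matrix.mul_apply] <;> ring

theorem ciconia_eq_reindex_fromBlocks (f h b c : R) :
    !![f, 0, b, c; 0, f, -c, b; b, -c, h, 0; c, b, 0, h] =
      reindex finSumFinEquiv finSumFinEquiv
        (fromBlocks (f • 1) !![b, c; -c, b] !![b, c; -c, b]ᴴ (h • 1)) := by
  ext i j
  fin_cases i <;> fin_cases j <;> simp [finSumFinEquiv, Fin.addCases]

end CiconiaBlocks

/-- **Signature of the ciconia metric, split case.**
For the symmetric matrix `G = [[f,0,b,c],[0,f,−c,b],[b,−c,h,0],[c,b,0,h]]` and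
`Δ = f·h − b² − c²`: `Δ < 0` holds if and only if exactly two of the four real
eigenvalues of `G` (with multiplicity) are positive and exactly two are
negative, i.e. `G` has signature `(2,2)`. -/
theorem statement4 (f h b c : ℝ)
    (G : Matrix (Fin 4) (Fin 4) ℝ)
    (hGdef : G = !![f, 0, b, c; 0, f, -c, b; b, -c, h, 0; c, b, 0, h])
    (hG : G.IsHermitian) :
    f * h - b ^ 2 - c ^ 2 < 0 ↔
      (Finset.univ.filter fun i => 0 < hG.eigenvalues i).card = 2 ∧
      (Finset.univ.filter fun i => hG.eigenvalues i < 0).card = 2 := by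
  rw [sub_sub]
  exact statement4_general finSumFinEquiv f h _ (ciconia_block_mul_conjTranspose b c)
    (hGdef.trans (ciconia_eq_reindex_fromBlocks f h b c)) hG
end

section
/- Let U ⊆ ℂ be a nonempty connected open set, λ : U → ℝ smooth and positive, Γ = (1/λ)∂λ/∂z. Let f, h ∈ ℝ be constants and let a : U → ℂ be smooth. Then the constant functions f, h and the pullback of a (independent of w) satisfy the Kähler system (∗) at every (z,w) ∈ U × ℂ if and only if a is holomorphic on U (∂a/∂z̄ = 0) and h·∂Γ/∂z̄ = 0 on U (i.e. either h = 0 or the Gauss curvature K vanishes identically). -/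
/-!
The weights `f`, `h` are constant and `a` does not depend on `w`, so the first Kähler equation is
trivial and, since `∂ā/∂z` is the conjugate of `∂a/∂z̄`, the second one reads
`conj (∂a/∂z̄) + w̄ · (h · ∂Γ/∂z̄) = 0`. Over a fixed `z` the left-hand side is affine in `w̄`,
hence vanishes for every `w` exactly when both of its coefficients do.
-/

open Complex

/-- Wirtinger derivative `∂u/∂z` of a one-variable function. -/
noncomputable def wD (u : ℂ → ℂ) (z : ℂ) : ℂ :=
  (fderiv ℝ u z 1 - Complex.I * fderiv ℝ u z Complex.I) / 2

/-- Conjugate Wirtinger derivative `∂u/∂z̄` of a one-variable function. -/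
noncomputable def wDbar (u : ℂ → ℂ) (z : ℂ) : ℂ :=
  (fderiv ℝ u z 1 + Complex.I * fderiv ℝ u z Complex.I) / 2

/-- Wirtinger derivative `∂u/∂z` in the first variable of `u : ℂ × ℂ → ℂ`. -/
noncomputable def wDz (u : ℂ × ℂ → ℂ) (p : ℂ × ℂ) : ℂ :=
  (fderiv ℝ u p (1, 0) - Complex.I * fderiv ℝ u p (Complex.I, 0)) / 2

/-- Wirtinger derivative `∂u/∂z̄` in the first variable of `u : ℂ × ℂ → ℂ`. -/
noncomputable def wDzbar (u : ℂ × ℂ → ℂ) (p : ℂ × ℂ) : ℂ :=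
  (fderiv ℝ u p (1, 0) + Complex.I * fderiv ℝ u p (Complex.I, 0)) / 2

/-- Wirtinger derivative `∂u/∂w` in the second variable of `u : ℂ × ℂ → ℂ`. -/
noncomputable def wDw (u : ℂ × ℂ → ℂ) (p : ℂ × ℂ) : ℂ :=
  (fderiv ℝ u p (0, 1) - Complex.I * fderiv ℝ u p (0, Complex.I)) / 2

/-- Wirtinger derivative `∂u/∂w̄` in the second variable of `u : ℂ × ℂ → ℂ`. -/
noncomputable def wDwbar (u : ℂ × ℂ → ℂ) (p : ℂ × ℂ) : ℂ :=
  (fderiv ℝ u p (0, 1) + Complex.I * fderiv ℝ u p (0, Complex.I)) / 2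

/-- The Kähler system (∗) for the ciconia metric `g_{f,a,h}` at the point
`p = (z,w)`:  `∂h/∂z = ∂a/∂w + wΓ ∂h/∂w` and
`∂f/∂w + wΓ ∂ā/∂w = ∂ā/∂z + w̄ h ∂Γ/∂z̄`. -/
def KahlerSystem (Γ : ℂ → ℂ) (f a h : ℂ × ℂ → ℂ) (p : ℂ × ℂ) : Prop :=
  wDz h p = wDw a p + p.2 * Γ p.1 * wDw h p ∧
  wDw f p + p.2 * Γ p.1 * wDw (fun q => starRingEnd ℂ (a q)) p
    = wDz (fun q => starRingEnd ℂ (a q)) p + starRingEnd ℂ p.2 * h p * wDbar Γ p.1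

section WirtingerCalculus

lemma wDz_const (c : ℂ) (p : ℂ × ℂ) : wDz (fun _ => c) p = 0 := by
  simp [wDz]

lemma wDw_const (c : ℂ) (p : ℂ × ℂ) : wDw (fun _ => c) p = 0 := by
  simp [wDw]

lemma fderiv_conj_comp_apply {E : Type*} [NormedAddCommGroup E] [NormedSpace ℝ E]
    (u : E → ℂ) (p v : E) :
    fderiv ℝ (fun q => starRingEnd ℂ (u q)) p v = starRingEnd ℂ (fderiv ℝ u p v) :=
  DFunLike.congr_fun (conjCLE.comp_fderiv (f := u) (x := p)) v

lemma wDz_conj (u : ℂ × ℂ → ℂ) (p : ℂ × ℂ) :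
    wDz (fun q => starRingEnd ℂ (u q)) p = starRingEnd ℂ (wDzbar u p) := by
  simp only [wDz, wDzbar, fderiv_conj_comp_apply, map_div₀, map_add, map_mul, conj_I, map_ofNat]
  ring

lemma wDw_conj (u : ℂ × ℂ → ℂ) (p : ℂ × ℂ) :
    wDw (fun q => starRingEnd ℂ (u q)) p = starRingEnd ℂ (wDwbar u p) := by
  simp only [wDw, wDwbar, fderiv_conj_comp_apply, map_div₀, map_add, map_mul, conj_I, map_ofNat]
  ring

variable {a : ℂ → ℂ} {p : ℂ × ℂ}

lemma fderiv_comp_fst_apply (ha : DifferentiableAt ℝ a p.1) (v : ℂ × ℂ) :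
    fderiv ℝ (fun q : ℂ × ℂ => a q.1) p v = fderiv ℝ a p.1 v.1 :=
  DFunLike.congr_fun (ha.hasFDerivAt.comp p hasFDerivAt_fst).fderiv v

lemma wDzbar_comp_fst (ha : DifferentiableAt ℝ a p.1) :
    wDzbar (fun q => a q.1) p = wDbar a p.1 := by
  simp only [wDzbar, wDbar, fderiv_comp_fst_apply ha]

lemma wDw_comp_fst (ha : DifferentiableAt ℝ a p.1) : wDw (fun q => a q.1) p = 0 := by
  simp [wDw, fderiv_comp_fst_apply ha]

lemma wDwbar_comp_fst (ha : DifferentiableAt ℝ a p.1) : wDwbar (fun q => a q.1) p = 0 := by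
  simp [wDwbar, fderiv_comp_fst_apply ha]

end WirtingerCalculus

lemma forall_add_mul_eq_zero_iff {R : Type*} [NonAssocSemiring R] {b c : R} :
    (∀ t : R, b + t * c = 0) ↔ b = 0 ∧ c = 0 := by
  constructor
  · intro H
    have hb : b = 0 := by simpa using H 0
    exact ⟨hb, by simpa [hb] using H 1⟩
  · rintro ⟨rfl, rfl⟩ t
    rw [mul_zero, add_zero]

lemma kahlerSystem_const_comp_fst_const_iff (Γ : ℂ → ℂ) (f h : ℂ) {a : ℂ → ℂ} {p : ℂ × ℂ}
    (ha : DifferentiableAt ℝ a p.1) :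
    KahlerSystem Γ (fun _ => f) (fun q => a q.1) (fun _ => h) p ↔
      starRingEnd ℂ (wDbar a p.1) + starRingEnd ℂ p.2 * (h * wDbar Γ p.1) = 0 := by
  simp only [KahlerSystem, wDz_const, wDw_const, wDz_conj, wDw_conj, wDzbar_comp_fst ha,
    wDw_comp_fst ha, wDwbar_comp_fst ha, map_zero, mul_zero, add_zero, true_and, mul_assoc]
  exact eq_comm

theorem statement14_general (Γ : ℂ → ℂ) (f h : ℂ) {a : ℂ → ℂ} {z : ℂ}
    (ha : DifferentiableAt ℝ a z) :
    (∀ w : ℂ, KahlerSystem Γ (fun _ => f) (fun p => a p.1) (fun _ => h) (z, w)) ↔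
      wDbar a z = 0 ∧ h * wDbar Γ z = 0 := by
  have conj_surjective : Function.Surjective (starRingEnd ℂ) := star_involutive.surjective
  calc (∀ w : ℂ, KahlerSystem Γ (fun _ => f) (fun p => a p.1) (fun _ => h) (z, w))
    _ ↔ ∀ w : ℂ, starRingEnd ℂ (wDbar a z) + starRingEnd ℂ w * (h * wDbar Γ z) = 0 :=
      forall_congr' fun w => kahlerSystem_const_comp_fst_const_iff Γ f h (p := (z, w)) ha
    _ ↔ ∀ t : ℂ, starRingEnd ℂ (wDbar a z) + t * (h * wDbar Γ z) = 0 :=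
      (conj_surjective.forall (p := fun t => _ + t * _ = 0)).symm
    _ ↔ wDbar a z = 0 ∧ h * wDbar Γ z = 0 := by
      rw [forall_add_mul_eq_zero_iff, map_eq_zero]

/-- **Corollary: constant weights `f, h` and base-dependent `a`.**
With `f, h` real constants and `a` smooth on the base `U`, the Kähler system
(∗) holds on all of `U × ℂ` if and only if `a` is holomorphic on `U` and
`h·∂Γ/∂z̄ = 0` on `U` (i.e. `h = 0` or the Gauss curvature vanishes). -/
theorem statement14 (U : Set ℂ) (hUconn : IsConnected U) (hU : IsOpen U)
    (lam : ℂ → ℝ) (hlam : ContDiffOn ℝ (⊤ : ℕ∞) lam U) (hlampos : ∀ z ∈ U, 0 < lam z)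
    (Γ : ℂ → ℂ) (hΓ : ∀ z ∈ U, Γ z = (↑(lam z))⁻¹ * wD (fun z => (lam z : ℂ)) z)
    (f h : ℝ) (a : ℂ → ℂ) (ha : ContDiffOn ℝ (⊤ : ℕ∞) a U) :
    (∀ z ∈ U, ∀ w : ℂ, KahlerSystem Γ
        (fun _ => (f : ℂ)) (fun p => a p.1) (fun _ => (h : ℂ)) (z, w)) ↔
      ((∀ z ∈ U, wDbar a z = 0) ∧ ∀ z ∈ U, (h : ℂ) * wDbar Γ z = 0) := by
  rw [← forall₂_and]
  exact forall₂_congr fun z hz => statement14_general Γ f h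
    ((ha.contDiffAt (hU.mem_nhds hz)).differentiableAt (by simp))
end

section
/- Let Kc ∈ ℝ with Kc ≠ 0, α ≥ 0, and let I ⊆ (0,∞) be a nonempty open interval. (a) Suppose c₀ ∈ ℝ is such that −Kc·(α s² + c₀ s − 1)/s > 0 for all s ∈ I; define f(s) = √(−Kc·(α s² + c₀ s − 1)/s) and h(s) = (α s² + 1)/(s²·f(s)) on I. Then f(s)·h(s) − α = 1/s² and 2·f'(s) = −Kc·h(s) for all s ∈ I. (b) Conversely, if f, h : I → ℝ are differentiable with f > 0 on I and satisfy f(s)·h(s) − α = 1/s² and 2·f'(s) = −Kc·h(s) for all s ∈ I, then there exists c₀ ∈ ℝ such that f(s)² = −Kc·(α s² + c₀ s − 1)/s for all s ∈ I, and then h(s) = (α s² + 1)/(s²·f(s)). -/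
/-!
Multiplying `2 f' = -Kc h` by `f` and eliminating `f h = α + 1 / s²` leaves the equation
`(f²)' = -Kc (α + 1 / s²)` for `f²` alone. On a connected open set avoiding `0` its solutions are
`f² = -Kc (α s - 1 / s + c₀)`, and since `Kc ≠ 0` every constant of integration has the form
`-Kc c₀`. Where `f ≠ 0` these steps can be reversed, with `h` determined by the first equation.
-/

lemma hasDerivAt_neg_mul_quadratic_div {𝕜 : Type*} [NontriviallyNormedField 𝕜]
    (Kc α c₀ : 𝕜) {s : 𝕜} (hs : s ≠ 0) :
    HasDerivAt (fun t => -Kc * (α * t ^ 2 + c₀ * t - 1) / t) (-Kc * (α + 1 / s ^ 2)) s := by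
  have hquad : HasDerivAt (fun t => α * t ^ 2 + c₀ * t - 1) (α * (2 * s) + c₀) s := by
    simpa using (((hasDerivAt_pow 2 s).const_mul α).add
      ((hasDerivAt_id' s).const_mul c₀)).sub_const 1
  refine ((hquad.const_mul (-Kc)).div (hasDerivAt_id' s) hs).congr_deriv ?_
  field_simp
  ring

lemma mul_sub_eq_one_div_sq_iff {𝕜 : Type*} [Field 𝕜] {x y s : 𝕜} (α : 𝕜) (hx : x ≠ 0)
    (hs : s ≠ 0) : x * y - α = 1 / s ^ 2 ↔ y = (α * s ^ 2 + 1) / (s ^ 2 * x) := by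
  rw [eq_div_iff (mul_ne_zero (pow_ne_zero 2 hs) hx), eq_div_iff (pow_ne_zero 2 hs)]
  constructor <;> intro hxy <;> linear_combination hxy

section RCLike

variable {𝕜 : Type*} [RCLike 𝕜] {Kc α : 𝕜} {U : Set 𝕜} {f : 𝕜 → 𝕜}

lemma deriv_sq_eq_iff_exists_sq_eq (hKc : Kc ≠ 0) (hU : IsOpen U) (hUconn : IsPreconnected U)
    (hU0 : 0 ∉ U) (hf : DifferentiableOn 𝕜 f U) :
    (∀ s ∈ U, deriv (fun t => f t ^ 2) s = -Kc * (α + 1 / s ^ 2)) ↔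
      ∃ c₀, ∀ s ∈ U, f s ^ 2 = -Kc * (α * s ^ 2 + c₀ * s - 1) / s := by
  have hderiv (c₀ : 𝕜) {s : 𝕜} (hs : s ∈ U) :=
    hasDerivAt_neg_mul_quadratic_div Kc α c₀ (ne_of_mem_of_not_mem hs hU0)
  constructor
  · intro hsq
    obtain ⟨c, hc⟩ := hU.exists_eq_add_of_deriv_eq hUconn (hf.pow 2)
      (fun s hs => (hderiv 0 hs).differentiableAt.differentiableWithinAt)
      (fun s hs => (hsq s hs).trans (hderiv 0 hs).deriv.symm)
    refine ⟨-c / Kc, fun s hs => (hc hs).trans ?_⟩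
    have hs0 : s ≠ 0 := ne_of_mem_of_not_mem hs hU0
    field_simp
    ring
  · rintro ⟨c₀, hsq⟩ s hs
    exact ((hderiv c₀ hs).congr_of_eventuallyEq
      (Filter.eventually_of_mem (hU.mem_nhds hs) hsq)).deriv

theorem statement16_general (hKc : Kc ≠ 0) (hU : IsOpen U) (hUconn : IsPreconnected U)
    (hU0 : 0 ∉ U) {h : 𝕜 → 𝕜} (hf : DifferentiableOn 𝕜 f U) (hf0 : ∀ s ∈ U, f s ≠ 0) :
    (∀ s ∈ U, f s * h s - α = 1 / s ^ 2 ∧ 2 * deriv f s = -Kc * h s) ↔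
      ∃ c₀, ∀ s ∈ U, f s ^ 2 = -Kc * (α * s ^ 2 + c₀ * s - 1) / s ∧
        h s = (α * s ^ 2 + 1) / (s ^ 2 * f s) := by
  have hricci (s : 𝕜) (hs : s ∈ U) := mul_sub_eq_one_div_sq_iff (y := h s) α (hf0 s hs)
    (ne_of_mem_of_not_mem hs hU0)
  have hkahler (s : 𝕜) (hs : s ∈ U) (hfh : f s * h s - α = 1 / s ^ 2) :
      2 * deriv f s = -Kc * h s ↔ deriv (fun t => f t ^ 2) s = -Kc * (α + 1 / s ^ 2) := by
    have hderiv : deriv (fun t => f t ^ 2) s = f s * (2 * deriv f s) := by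
      rw [((hf.differentiableAt (hU.mem_nhds hs)).hasDerivAt.fun_pow 2).deriv]
      ring
    have hrhs : -Kc * (α + 1 / s ^ 2) = f s * (-Kc * h s) := by
      rw [← hfh]
      ring
    rw [hderiv, hrhs, mul_right_inj' (hf0 s hs)]
  have hsq := deriv_sq_eq_iff_exists_sq_eq (α := α) hKc hU hUconn hU0 hf
  constructor
  · intro hsys
    obtain ⟨c₀, hc₀⟩ := hsq.1 fun s hs => (hkahler s hs (hsys s hs).1).1 (hsys s hs).2
    exact ⟨c₀, fun s hs => ⟨hc₀ s hs, (hricci s hs).1 (hsys s hs).1⟩⟩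
  · rintro ⟨c₀, hsol⟩ s hs
    have hfh := (hricci s hs).2 (hsol s hs).2
    exact ⟨hfh, (hkahler s hs hfh).2 (hsq.2 ⟨c₀, fun t ht => (hsol t ht).1⟩ s hs)⟩

end RCLike

/-- **General solution of the Kähler Ricci-flat system for `K ≠ 0`.**
On a nonempty open interval `I ⊆ (0,∞)` (in the variable `s = r²`), with
`Kc ≠ 0` and `α = |a|² ≥ 0`:
(a) the functions `f(s) = √(−Kc(αs² + c₀s − 1)/s)` and
`h(s) = (αs² + 1)/(s²f(s))` solve `f·h − α = 1/s²` and `2f' = −Kc·h`, provided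
`−Kc(αs² + c₀s − 1)/s > 0` on `I`;
(b) conversely, every differentiable positive solution `f` (with `h`) of this
system is of this form for some constant `c₀`. -/
theorem statement16 (Kc : ℝ) (hKc : Kc ≠ 0) (α : ℝ) (hα : 0 ≤ α)
    (I : Set ℝ) (hIne : I.Nonempty) (hIopen : IsOpen I) (hIconn : I.OrdConnected)
    (hIpos : I ⊆ Set.Ioi (0 : ℝ)) :
    (∀ c₀ : ℝ, (∀ s ∈ I, 0 < -Kc * (α * s ^ 2 + c₀ * s - 1) / s) →
      ∀ f h : ℝ → ℝ,
        (∀ s ∈ I, f s = Real.sqrt (-Kc * (α * s ^ 2 + c₀ * s - 1) / s)) →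
        (∀ s ∈ I, h s = (α * s ^ 2 + 1) / (s ^ 2 * f s)) →
        ∀ s ∈ I, f s * h s - α = 1 / s ^ 2 ∧ 2 * deriv f s = -Kc * h s) ∧
    (∀ f h : ℝ → ℝ,
      (∀ s ∈ I, DifferentiableAt ℝ f s) → (∀ s ∈ I, DifferentiableAt ℝ h s) →
      (∀ s ∈ I, 0 < f s) →
      (∀ s ∈ I, f s * h s - α = 1 / s ^ 2) →
      (∀ s ∈ I, 2 * deriv f s = -Kc * h s) →
      ∃ c₀ : ℝ, ∀ s ∈ I,
        f s ^ 2 = -Kc * (α * s ^ 2 + c₀ * s - 1) / s ∧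
        h s = (α * s ^ 2 + 1) / (s ^ 2 * f s)) := by
  have hI0 : (0 : ℝ) ∉ I := fun h0 => Set.self_notMem_Ioi (hIpos h0)
  have hIpre := hIconn.isPreconnected
  constructor
  · intro c₀ hpos f h hf hh
    have hfdiff : DifferentiableOn ℝ f I := DifferentiableOn.congr (fun s hs =>
      ((hasDerivAt_neg_mul_quadratic_div Kc α c₀ (hIpos hs).ne').sqrt
        (hpos s hs).ne').differentiableAt.differentiableWithinAt) hf
    have hf0 : ∀ s ∈ I, f s ≠ 0 := fun s hs => by
      rw [hf s hs]
      exact (Real.sqrt_pos.2 (hpos s hs)).ne'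
    exact (statement16_general hKc hIopen hIpre hI0 hfdiff hf0).2 ⟨c₀, fun s hs =>
      ⟨by rw [hf s hs, Real.sq_sqrt (hpos s hs).le], hh s hs⟩⟩
  · intro f h hfdiff _ hfpos hricci hkahler
    exact (statement16_general hKc hIopen hIpre hI0
      (fun s hs => (hfdiff s hs).differentiableWithinAt) fun s hs => (hfpos s hs).ne').1
      fun s hs => ⟨hricci s hs, hkahler s hs⟩
end
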